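/- Let p ≥ 1 be an integer. For every real polynomial u of degree at most p with Legendre expansion u = Σ_{i=0}^{p} a_i P_i, it holds that ∫_{−1}^{1} (u'(x))² dx ≥ (4p − 2) a_p². -/

import Mathlib

open Polynomial

/-- The `n`-th Legendre polynomial, given by the Rodrigues formula
`P_n(x) = 1/(2^n n!) dⁿ/dxⁿ (x² − 1)ⁿ`, normalized so that `P_n(1) = 1`. -/
noncomputable def legendre (n : ℕ) : Polynomial ℝ :=
  Polynomial.C (1 / (2 ^ n * (n.factorial : ℝ))) *
    (⇑(Polynomial.derivative (R := ℝ)))^[n] ((Polynomial.X ^ 2 - 1) ^ n)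

/-- The polynomial `χ_p(x) = P_{p−1}'(x) (x² − 1)`, whose roots are the `p`
Gauss–Lobatto nodes. -/
noncomputable def lobattoChi (p : ℕ) : Polynomial ℝ :=
  Polynomial.derivative (legendre (p - 1)) * (Polynomial.X ^ 2 - 1)

noncomputable def lgJ (f : Polynomial ℝ) : ℝ := ∫ x in (-1 : ℝ)..1, f.eval x

lemma lgJ_add (f g : Polynomial ℝ) : lgJ (f + g) = lgJ f + lgJ g := by
  unfold lgJ
  rw [← intervalIntegral.integral_add (f.continuous.intervalIntegrable _ _)
    (g.continuous.intervalIntegrable _ _)]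
  simp

lemma lgJ_C_mul (c : ℝ) (f : Polynomial ℝ) : lgJ (C c * f) = c * lgJ f := by
  unfold lgJ
  rw [← intervalIntegral.integral_const_mul]
  simp

lemma lgJ_nonneg_sq (f : Polynomial ℝ) : 0 ≤ lgJ (f ^ 2) := by
  unfold lgJ
  apply intervalIntegral.integral_nonneg (by norm_num)
  intro x _
  simp only [eval_pow]
  positivity

lemma lgJ_derivative (f : Polynomial ℝ) : lgJ (derivative f) = f.eval 1 - f.eval (-1) := by
  unfold lgJ
  exact intervalIntegral.integral_eq_sub_of_hasDerivAt (fun x _ => f.hasDerivAt x)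
    ((derivative f).continuous.intervalIntegrable _ _)

lemma lg_eval_zero (n k : ℕ) (hk : k < n) (x : ℝ) (hx : x ^ 2 = 1) :
    (derivative^[k] ((X ^ 2 - 1 : Polynomial ℝ) ^ n)).eval x = 0 := by
  have h := pow_sub_dvd_iterate_derivative_pow (X ^ 2 - 1 : Polynomial ℝ) n k
  obtain ⟨g, hg⟩ := h
  rw [hg]
  have : n - k ≠ 0 := by omega
  simp [hx, this]

lemma lg_parts (n : ℕ) (k : ℕ) : k ≤ n → ∀ q : Polynomial ℝ,
    lgJ (q * derivative^[k] ((X ^ 2 - 1 : Polynomial ℝ) ^ n)) =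
      (-1) ^ k * lgJ (derivative^[k] q * (X ^ 2 - 1 : Polynomial ℝ) ^ n) := by
  induction k with
  | zero => intro _ q; simp
  | succ k ih =>
    intro hk q
    have h1 := ih (by omega) (derivative q)
    have h2 := lgJ_derivative (q * derivative^[k] ((X ^ 2 - 1 : Polynomial ℝ) ^ n))
    rw [derivative_mul, lgJ_add, eval_mul, eval_mul, lg_eval_zero n k (by omega) 1 (by norm_num),
      lg_eval_zero n k (by omega) (-1) (by norm_num), h1] at h2
    rw [Function.iterate_succ_apply', Function.iterate_succ_apply, pow_succ (-1 : ℝ) k]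
    linarith

lemma lg_iter_const (n : ℕ) (q : Polynomial ℝ) (hq : q.natDegree ≤ n) :
    derivative^[n] q = C (n.factorial * q.coeff n) := by
  ext m
  rw [coeff_iterate_derivative, coeff_C]
  rcases Nat.eq_zero_or_pos m with rfl | hm
  · simp [Nat.descFactorial_self]
  · rw [coeff_eq_zero_of_natDegree_lt (by omega)]
    simp [hm.ne']

lemma lg_orth (n : ℕ) (q : Polynomial ℝ) (hq : q.natDegree ≤ n) :
    lgJ (q * legendre n) =
      q.coeff n * ((-1) ^ n * lgJ ((X ^ 2 - 1 : Polynomial ℝ) ^ n) / 2 ^ n) := by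
  unfold legendre
  rw [mul_left_comm, lgJ_C_mul, lg_parts n n le_rfl, lg_iter_const n q hq, lgJ_C_mul]
  have : (n.factorial : ℝ) ≠ 0 := by positivity
  field_simp

lemma lg_I_succ (n : ℕ) : (2 * (n : ℝ) + 3) * lgJ ((X ^ 2 - 1 : Polynomial ℝ) ^ (n + 1)) =
    -(2 * n + 2) * lgJ ((X ^ 2 - 1 : Polynomial ℝ) ^ n) := by
  have h := lgJ_derivative (X * (X ^ 2 - 1 : Polynomial ℝ) ^ (n + 1))
  have e : derivative (X * (X ^ 2 - 1 : Polynomial ℝ) ^ (n + 1)) =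
      C (2 * (n : ℝ) + 3) * (X ^ 2 - 1 : Polynomial ℝ) ^ (n + 1) +
      C (2 * (n : ℝ) + 2) * (X ^ 2 - 1 : Polynomial ℝ) ^ n := by
    simp only [derivative_mul, derivative_X, derivative_pow, derivative_sub, derivative_one,
      map_add, map_mul, map_natCast, map_ofNat, Nat.add_sub_cancel]
    push_cast
    ring
  rw [e, lgJ_add, lgJ_C_mul, lgJ_C_mul] at h
  simp at h
  linarith

lemma lg_natDegree (n : ℕ) : (legendre n).natDegree ≤ n := by
  unfold legendre
  refine (natDegree_C_mul_le _ _).trans ((natDegree_iterate_derivative _ _).trans ?_)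
  have : ((X ^ 2 - 1 : Polynomial ℝ) ^ n).natDegree ≤ n * 2 :=
    natDegree_pow_le_of_le n (by compute_degree)
  omega

lemma lg_coeff (n : ℕ) : (legendre n).coeff n = n.centralBinom / 2 ^ n := by
  have hm : ((X ^ 2 - 1 : Polynomial ℝ) ^ n).coeff (n * 2) = 1 := by
    rw [coeff_pow_of_natDegree_le (by compute_degree)]
    simp [coeff_one]
  unfold legendre
  rw [coeff_C_mul, coeff_iterate_derivative, show n + n = n * 2 by ring, hm,
    Nat.descFactorial_eq_factorial_mul_choose, Nat.centralBinom, mul_comm n 2]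
  have : (n.factorial : ℝ) ≠ 0 := by positivity
  simp only [nsmul_eq_mul]
  push_cast
  field_simp

lemma lg_coeff_succ (n : ℕ) :
    ((n : ℝ) + 1) * (legendre (n + 1)).coeff (n + 1) = (2 * n + 1) * (legendre n).coeff n := by
  rw [lg_coeff, lg_coeff]
  have h : (((n + 1) * (n + 1).centralBinom : ℕ) : ℝ) = (2 * (2 * n + 1) * n.centralBinom : ℕ) := by
    rw [Nat.succ_mul_centralBinom_succ]
  push_cast at h
  rw [pow_succ]
  field_simp
  linarith

lemma lg_norm (n : ℕ) : (2 * (n : ℝ) + 1) * ((legendre n).coeff n *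
    ((-1) ^ n * lgJ ((X ^ 2 - 1 : Polynomial ℝ) ^ n) / 2 ^ n)) = 2 := by
  induction n with
  | zero =>
    rw [lg_coeff]
    simp [lgJ]
    norm_num
  | succ n ih =>
    have h1 := lg_coeff_succ n
    have h2 := lg_I_succ n
    have hn : (n : ℝ) + 1 ≠ 0 := by positivity
    refine Eq.trans ?_ ih
    push_cast
    have h3 : (legendre (n + 1)).coeff (n + 1) = (2 * n + 1) * (legendre n).coeff n / (n + 1) := by
      rw [← h1]; field_simp
    have h4 : lgJ ((X ^ 2 - 1 : Polynomial ℝ) ^ (n + 1)) =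
        -(2 * n + 2) * lgJ ((X ^ 2 - 1 : Polynomial ℝ) ^ n) / (2 * n + 3) := by
      rw [← h2]; field_simp
    rw [h3, h4, pow_succ (-1 : ℝ) n, pow_succ (2 : ℝ) n]
    have : 2 * (n : ℝ) + 3 ≠ 0 := by positivity
    have e : 2 * ((n : ℝ) + 1) + 1 = 2 * n + 3 := by ring
    rw [e]
    field_simp

/-- For `p ≥ 1` and `u = Σ_{i=0}^{p} a_i P_i` a polynomial of degree at most `p`
with Legendre coefficients `a_i`, it holds that
`∫_{−1}^{1} (u')² ≥ (4p − 2) a_p²`. -/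
theorem h1_seminorm_sq_ge (p : ℕ) (hp : 1 ≤ p) (a : ℕ → ℝ) (u : Polynomial ℝ)
    (hu : u = ∑ i ∈ Finset.range (p + 1), Polynomial.C (a i) * legendre i) :
    (4 * (p : ℝ) - 2) * a p ^ 2 ≤
      ∫ x in (-1 : ℝ)..1, (Polynomial.derivative u).eval x ^ 2 := by
  obtain ⟨n, rfl⟩ : ∃ n, p = n + 1 := ⟨p - 1, by omega⟩
  have hJ : ∫ x in (-1 : ℝ)..1, (Polynomial.derivative u).eval x ^ 2 =
      lgJ (derivative u ^ 2) := by simp [lgJ]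
  rw [hJ]
  have hdeg : u.natDegree ≤ n + 1 := by
    rw [hu]
    apply natDegree_sum_le_of_forall_le
    intro i hi
    have := lg_natDegree i
    have h2 := natDegree_C_mul_le (a i) (legendre i)
    have := Finset.mem_range.mp hi
    omega
  have hcoef : u.coeff (n + 1) = a (n + 1) * (legendre (n + 1)).coeff (n + 1) := by
    rw [hu, finsetSum_coeff, Finset.sum_range_succ, coeff_C_mul, Finset.sum_eq_zero, zero_add]
    intro i hi
    have := lg_natDegree i
    have := Finset.mem_range.mp hi
    rw [coeff_C_mul, coeff_eq_zero_of_natDegree_lt (by omega), mul_zero]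
  have hqd : (derivative u).natDegree ≤ n := (natDegree_derivative_le u).trans (by omega)
  have hqc : (derivative u).coeff n = (2 * n + 1) * a (n + 1) * (legendre n).coeff n := by
    rw [coeff_derivative, hcoef]
    linear_combination a (n + 1) * lg_coeff_succ n
  have h1 := lg_orth n _ hqd
  have h2 := lg_orth n _ (lg_natDegree n)
  have h3 := lg_norm n
  rw [hqc] at h1
  set K := ((-1) ^ n * lgJ ((X ^ 2 - 1 : Polynomial ℝ) ^ n) / 2 ^ n) with hK
  set c : ℝ := (2 * n + 1) * a (n + 1) with hc
  have h0 := lgJ_nonneg_sq (derivative u - C c * legendre n)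
  have e : (derivative u - C c * legendre n) ^ 2 = derivative u ^ 2 +
      (C (-2 * c) * (derivative u * legendre n) + C (c ^ 2) * (legendre n * legendre n)) := by
    simp only [map_mul, map_pow, map_neg, map_ofNat]
    ring
  rw [e, lgJ_add, lgJ_add, lgJ_C_mul, lgJ_C_mul, h1, h2] at h0
  have h5 : (4 * ((n + 1 : ℕ) : ℝ) - 2) * a (n + 1) ^ 2 = c ^ 2 * ((legendre n).coeff n * K) := by
    rw [hc]
    push_cast
    linear_combination (-(2 * n + 1) * a (n + 1) ^ 2) * h3
  rw [h5]
  nlinarith [h0]
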